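/- For every odd integer n ≥ 3, the total number of involutions of {1,2,…,n} that contain the pattern 123 exactly once equals (3/n)·C(n, (n-3)/2); for every even n this number is 0. -/

import Mathlib

/-- The number of fixed points of a permutation of `Fin n`. -/
def fixedPts {n : ℕ} (π : Equiv.Perm (Fin n)) : ℕ :=
  (Finset.univ.filter fun i => π i = i).card

/-- A permutation is an involution if it is its own inverse. -/
def IsInvolution {n : ℕ} (π : Equiv.Perm (Fin n)) : Prop :=
  ∀ i, π (π i) = i

/-- The number of occurrences of the pattern 123 in a permutation of `Fin n`. -/
noncomputable def occ123 {n : ℕ} (π : Equiv.Perm (Fin n)) : ℕ :=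
  Nat.card {t : Fin n × Fin n × Fin n //
    t.1 < t.2.1 ∧ t.2.1 < t.2.2 ∧ (π t.1 < π t.2.1 ∧ π t.2.1 < π t.2.2)}

/-- `i_n(∅;123)`: the number of involutions of `{1, …, n}` containing the pattern
123 exactly once. -/
noncomputable def iCountOnceTotal123 (n : ℕ) : ℕ :=
  Nat.card {π : Equiv.Perm (Fin n) // IsInvolution π ∧ occ123 π = 1}

def Av123 {n : ℕ} (σ : Equiv.Perm (Fin n)) : Prop :=
  ∀ i j k, i < j → j < k → σ i < σ j → σ j < σ k → False

def GoodP {n : ℕ} (k : ℕ) (σ : Equiv.Perm (Fin n)) : Prop :=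
  Av123 σ ∧ ∀ i j, i < j → k ≤ (σ i).val → k ≤ (σ j).val → σ j < σ i

noncomputable def cntA (n k : ℕ) : ℕ := Nat.card {σ : Equiv.Perm (Fin n) // GoodP k σ}

def consP {n : ℕ} (v : Fin (n+1)) (σ : Equiv.Perm (Fin n)) : Equiv.Perm (Fin (n+1)) :=
  ((finSuccEquiv n).trans (Equiv.optionCongr σ)).trans (finSuccEquiv' v).symm

lemma consP_zero {n : ℕ} (v : Fin (n+1)) (σ : Equiv.Perm (Fin n)) : consP v σ 0 = v := by
  simp [consP]

lemma consP_succ {n : ℕ} (v : Fin (n+1)) (σ : Equiv.Perm (Fin n)) (i : Fin n) :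
    consP v σ i.succ = v.succAbove (σ i) := by
  simp [consP]

lemma consP_bij (n : ℕ) : Function.Bijective
    (fun p : Fin (n+1) × Equiv.Perm (Fin n) => consP p.1 p.2) := by
  rw [Fintype.bijective_iff_injective_and_card]
  constructor
  · rintro ⟨v, σ⟩ ⟨w, τ⟩ h
    simp only at h
    have h0 : v = w := by rw [← consP_zero v σ, h, consP_zero]
    subst h0
    congr 1
    ext1 i
    have := consP_succ v σ i
    rw [h, consP_succ] at this
    exact (Fin.succAbove_right_injective this).symm
  · simp [Fintype.card_perm, Nat.factorial_succ]

lemma card_split {n : ℕ} (P : Equiv.Perm (Fin (n+1)) → Prop) :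
    Nat.card {π : Equiv.Perm (Fin (n+1)) // P π} =
      ∑ v : Fin (n+1), Nat.card {σ : Equiv.Perm (Fin n) // P (consP v σ)} := by
  rw [← Nat.card_sigma]
  symm
  refine Nat.card_congr (((Equiv.subtypeProdEquivSigmaSubtype
    (fun v σ => P (consP v σ))).symm).trans ?_)
  exact Equiv.subtypeEquiv (Equiv.ofBijective _ (consP_bij n)) (fun a => Iff.rfl)

lemma good_lt {n : ℕ} (v : Fin (n+1)) (σ : Equiv.Perm (Fin n)) (k : ℕ) (h : v.val < k) :
    GoodP k (consP v σ) ↔ GoodP v.val σ := by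
  have sA : ∀ x : Fin n, (v.val < (v.succAbove x).val ↔ v.val ≤ x.val) := by
    intro x
    simp only [Fin.succAbove, Fin.lt_def]
    split_ifs <;> simp at * <;> omega
  constructor
  · rintro ⟨h1, h2⟩
    refine ⟨?_, ?_⟩
    · intro i j l hij hjl a b
      refine h1 i.succ j.succ l.succ (by simpa) (by simpa) ?_ ?_
      · simpa [consP_succ] using a
      · simpa [consP_succ] using b
    · intro i j hij hi hj
      by_contra hc
      have hne : σ i ≠ σ j := fun e => hij.ne (σ.injective e)
      have hlt : σ i < σ j := lt_of_le_of_ne (not_lt.mp hc) hne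
      refine h1 0 i.succ j.succ (Fin.succ_pos i) (by simpa) ?_ ?_
      · rw [consP_zero, consP_succ, Fin.lt_def, sA]; exact hi
      · simpa [consP_succ] using hlt
  · rintro ⟨h1, h2⟩
    refine ⟨?_, ?_⟩
    · intro i j l hij hjl a b
      obtain ⟨j, rfl⟩ := Fin.exists_succ_eq.mpr (Fin.ne_zero_of_lt hij)
      obtain ⟨l, rfl⟩ := Fin.exists_succ_eq.mpr (Fin.ne_zero_of_lt hjl)
      simp only [consP_succ, Fin.succAbove_lt_succAbove_iff, Fin.succ_lt_succ_iff] at b hjl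
      rcases Fin.eq_zero_or_eq_succ i with rfl | ⟨i, rfl⟩
      · rw [consP_zero, consP_succ, Fin.lt_def, sA] at a
        have := h2 j l hjl a (a.trans (Fin.lt_def.mp b).le)
        exact absurd b (not_lt.mpr this.le)
      · simp only [consP_succ, Fin.succAbove_lt_succAbove_iff, Fin.succ_lt_succ_iff] at a hij
        exact h1 i j l hij hjl a b
    · intro i j hij hi hj
      obtain ⟨j, rfl⟩ := Fin.exists_succ_eq.mpr (Fin.ne_zero_of_lt hij)
      rcases Fin.eq_zero_or_eq_succ i with rfl | ⟨i, rfl⟩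
      · rw [consP_zero] at hi; omega
      · simp only [consP_succ, Fin.succAbove_lt_succAbove_iff, Fin.succ_lt_succ_iff] at hi hj hij ⊢
        exact h2 i j hij ((sA _).mp (by omega)) ((sA _).mp (by omega))

lemma good_ge {n : ℕ} (v : Fin (n+1)) (σ : Equiv.Perm (Fin n)) (k : ℕ) (h : k ≤ v.val) :
    GoodP k (consP v σ) ↔ v.val = n ∧ GoodP k σ := by
  constructor
  · rintro ⟨h1, h2⟩
    have hv : v = Fin.last n := by
      by_contra hne
      have hz : (consP v σ).symm (Fin.last n) ≠ 0 := by
        intro e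
        rw [Equiv.symm_apply_eq, consP_zero] at e
        exact hne e.symm
      have := h2 0 _ (Fin.pos_of_ne_zero hz) (by rw [consP_zero]; exact h)
        (by rw [Equiv.apply_symm_apply]; simp; omega)
      rw [Equiv.apply_symm_apply, consP_zero] at this
      exact absurd this (not_lt.mpr (Fin.le_last _))
    subst hv
    refine ⟨by simp, ?_, ?_⟩
    · intro i j l hij hjl a b
      refine h1 i.succ j.succ l.succ (by simpa) (by simpa) ?_ ?_
      · simpa [consP_succ] using a
      · simpa [consP_succ] using b
    · intro i j hij hi hj
      have := h2 i.succ j.succ (by simpa) (by simpa [consP_succ] using hi) (by simpa [consP_succ] using hj)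
      simpa [consP_succ] using this
  · rintro ⟨hv, h1, h2⟩
    have hv : v = Fin.last n := Fin.ext (by simpa using hv)
    subst hv
    refine ⟨?_, ?_⟩
    · intro i j l hij hjl a b
      obtain ⟨j, rfl⟩ := Fin.exists_succ_eq.mpr (Fin.ne_zero_of_lt hij)
      obtain ⟨l, rfl⟩ := Fin.exists_succ_eq.mpr (Fin.ne_zero_of_lt hjl)
      simp only [consP_succ, Fin.succAbove_lt_succAbove_iff, Fin.succ_lt_succ_iff] at b hjl
      rcases Fin.eq_zero_or_eq_succ i with rfl | ⟨i, rfl⟩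
      · rw [consP_zero] at a
        exact absurd a (not_lt.mpr (Fin.le_last _))
      · simp only [consP_succ, Fin.succAbove_lt_succAbove_iff, Fin.succ_lt_succ_iff] at a hij
        exact h1 i j l hij hjl a b
    · intro i j hij hi hj
      obtain ⟨j, rfl⟩ := Fin.exists_succ_eq.mpr (Fin.ne_zero_of_lt hij)
      rcases Fin.eq_zero_or_eq_succ i with rfl | ⟨i, rfl⟩
      · rw [consP_zero, consP_succ]; simp [Fin.castSucc_lt_last]
      · simp only [consP_succ, Fin.succAbove_lt_succAbove_iff, Fin.succ_lt_succ_iff] at hi hj hij ⊢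
        simp at hi hj
        exact h2 i j hij hi hj

lemma cnt_term {n : ℕ} (v : Fin (n+1)) (k : ℕ) :
    Nat.card {σ : Equiv.Perm (Fin n) // GoodP k (consP v σ)} =
      if v.val < k then cntA n v.val else if v.val = n then cntA n k else 0 := by
  split_ifs with h1 h2
  · simp only [good_lt v _ k h1]; rfl
  · simp only [good_ge v _ k (not_lt.mp h1), h2, true_and]; rfl
  · simp only [good_ge v _ k (not_lt.mp h1), h2, false_and]; simp

lemma cntA_succ_le (n k : ℕ) (h : k ≤ n) :
    cntA (n+1) k = ∑ v ∈ Finset.range k, cntA n v + cntA n k := by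
  rw [cntA, card_split]
  simp only [cnt_term]
  rw [Fin.sum_univ_eq_sum_range
    (fun v => if v < k then cntA n v else if v = n then cntA n k else 0), Finset.sum_range_succ]
  rw [← Finset.sum_subset (s₁ := Finset.range k) (by intro x; simp; omega)]
  · congr 1
    · exact Finset.sum_congr rfl (fun x hx => by simp at hx; simp [hx])
    · simp; omega
  · intro x hx hx'
    simp at hx hx'
    rw [if_neg (by omega), if_neg (by omega)]

lemma cntA_succ_top (n : ℕ) :
    cntA (n+1) (n+1) = ∑ v ∈ Finset.range (n+1), cntA n v := by
  rw [cntA, card_split]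
  simp only [cnt_term]
  rw [Fin.sum_univ_eq_sum_range
    (fun v => if v < n+1 then cntA n v else if v = n then cntA n (n+1) else 0)]
  exact Finset.sum_congr rfl (fun x hx => by simp at hx; simp; omega)

lemma cnt_target (m : ℕ) :
    Nat.card {σ : Equiv.Perm (Fin (m+1)) // Av123 σ ∧ σ 0 ≠ Fin.last m} =
      ∑ v ∈ Finset.range m, cntA m v := by
  have e : ∀ σ : Equiv.Perm (Fin (m+1)), Av123 σ ↔ GoodP (m+1) σ := by
    intro σ
    refine ⟨fun h => ⟨h, fun i j _ hi => ?_⟩, fun h => h.1⟩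
    have := (σ i).2; omega
  rw [card_split]
  simp only [consP_zero]
  rw [Fin.sum_univ_castSucc]
  have : Nat.card {σ : Equiv.Perm (Fin m) // Av123 (consP (Fin.last m) σ) ∧ Fin.last m ≠ Fin.last m} = 0 := by
    simp
  rw [this, add_zero, ← Fin.sum_univ_eq_sum_range]
  refine Finset.sum_congr rfl fun x _ => ?_
  have hx : x.castSucc ≠ Fin.last m := (Fin.castSucc_lt_last x).ne
  simp only [hx, ne_eq, not_false_eq_true, and_true, e]
  rw [cnt_term]
  simp

lemma cntA_zero (n : ℕ) : cntA n 0 = 1 := by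
  induction n with
  | zero =>
    rw [cntA, Nat.card_eq_one_iff_unique]
    refine ⟨⟨fun a b => Subtype.ext (Subsingleton.elim _ _)⟩, ⟨⟨1, ?_, ?_⟩⟩⟩
    · intro i; exact i.elim0
    · intro i; exact i.elim0
  | succ n ih => rw [cntA_succ_le n 0 (by omega), ih]; simp

lemma cntA_form (n : ℕ) : ∀ k, k + 1 ≤ n →
    cntA n (k+1) + (n+k+1).choose k = (n+k+1).choose (k+1) := by
  induction n with
  | zero => intro k h; omega
  | succ n ih =>
    have step : ∀ k, k + 1 ≤ n → cntA (n+1) (k+1) = cntA (n+1) k + cntA n (k+1) := by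
      intro k hk
      rw [cntA_succ_le n (k+1) hk, cntA_succ_le n k (by omega), Finset.sum_range_succ]
    have main : ∀ k, k + 1 ≤ n →
        cntA (n+1) (k+1) + (n+1+k+1).choose k = (n+1+k+1).choose (k+1) := by
      intro k
      induction k with
      | zero =>
        intro h
        have := ih 0 h
        rw [step 0 h, cntA_zero]
        simp at this ⊢
        omega
      | succ k ihk =>
        intro h
        have h1 := ih (k+1) h
        have h2 := ihk (by omega)
        rw [step (k+1) h]
        have e1 : n + 1 + (k+1) + 1 = (n+k+2)+1 := by ring
        have e2 : n + (k+1) + 1 = n+k+2 := by ring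
        have e3 : n + 1 + k + 1 = n+k+2 := by ring
        rw [e2] at h1
        rw [e3] at h2
        rw [e1, Nat.choose_succ_succ, Nat.choose_succ_succ (n+k+2) (k+1)]
        simp only [Nat.succ_eq_add_one] at *
        omega
    intro k hk
    rcases Nat.lt_or_ge k n with h | h
    · exact main k h
    · obtain rfl : k = n := by omega
      have : cntA (k+1) (k+1) = cntA (k+1) k := by
        rw [cntA_succ_top, cntA_succ_le k k le_rfl, Finset.sum_range_succ]
      rw [this]
      rcases k with _ | k
      · simp [cntA_zero]
      · have h2 := main k le_rfl
        have e3 : k + 1 + 1 + k + 1 = 2*k+3 := by ring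
        have e1 : k + 1 + 1 + (k+1) + 1 = (2*k+3)+1 := by ring
        rw [e3] at h2
        rw [e1, Nat.choose_succ_succ, Nat.choose_succ_succ (2*k+3) (k+1)]
        have : (2*k+3).choose (k+1+1) = (2*k+3).choose (k+1) :=
          Nat.choose_symm_of_eq_add (by omega)
        simp only [Nat.succ_eq_add_one] at *
        omega

lemma target_form (m : ℕ) (hm : 1 ≤ m) :
    (2*m+1) * ∑ v ∈ Finset.range m, cntA m v = 3 * (2*m+1).choose (m-1) := by
  obtain ⟨k, rfl⟩ : ∃ k, m = k+1 := ⟨m-1, by omega⟩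
  have : ∑ v ∈ Finset.range (k+1), cntA (k+1) v = cntA (k+2) k := by
    rw [cntA_succ_le (k+1) k (by omega), Finset.sum_range_succ]
  rw [this]
  rcases k with _ | k
  · simp [cntA_zero]
  · have h := cntA_form (k+3) k (by omega)
    have e : k + 3 + k + 1 = 2*k+4 := by ring
    rw [e] at h
    have e2 : 2 * (k+1+1)+1 = 2*k+4+1 := by ring
    have e3 : k + 1 + 1 - 1 = k+1 := by omega
    rw [e2, e3]
    have h2 := Nat.choose_succ_succ (2*k+4) k
    have h3 := Nat.choose_succ_right_eq (2*k+4) k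
    have e4 : 2*k+4-k = k+4 := by omega
    rw [e4] at h3
    simp only [Nat.succ_eq_add_one] at *
    change (2*k+4+1) * cntA (k+3) (k+1) = _
    rw [h2]
    zify at *
    have : cntA (k+3) (k+1) = ((2*k+4).choose (k+1) : ℤ) - (2*k+4).choose k := by linarith
    rw [this]
    linear_combination 2 * h3

def Occ {n : ℕ} (π : Equiv.Perm (Fin n)) (i j k : Fin n) : Prop :=
  i < j ∧ j < k ∧ (π i < π j ∧ π j < π k)

lemma occ_one_iff {n : ℕ} (π : Equiv.Perm (Fin n)) :
    occ123 π = 1 ↔ ∃ a b c, Occ π a b c ∧ ∀ i j k, Occ π i j k → i = a ∧ j = b ∧ k = c := by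
  unfold occ123
  rw [Nat.card_eq_one_iff_unique]
  constructor
  · rintro ⟨⟨h⟩, ⟨⟨⟨a, b, c⟩, habc⟩⟩⟩
    refine ⟨a, b, c, habc, fun i j k hijk => ?_⟩
    have := congrArg Subtype.val (h ⟨(i, j, k), hijk⟩ ⟨(a, b, c), habc⟩)
    simpa using this
  · rintro ⟨a, b, c, habc, h⟩
    refine ⟨⟨?_⟩, ⟨⟨(a, b, c), habc⟩⟩⟩
    rintro ⟨⟨i, j, k⟩, hx⟩ ⟨⟨i', j', k'⟩, hy⟩
    have h1 := h i j k hx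
    have h2 := h i' j' k' hy
    simp [h1, h2]

/-- structure of good involutions -/
lemma struct {n : ℕ} (π : Equiv.Perm (Fin n)) (hI : IsInvolution π) (hO : occ123 π = 1) :
    ∃ a b c : Fin n, a < b ∧ b < c ∧ π a = a ∧ π b = b ∧ π c = c ∧ n = 2 * b.val + 1 ∧
      (∀ x, x < b → x ≠ a → b < π x) ∧ (∀ x, b < x → x ≠ c → π x < b) ∧
      ∀ i j k, Occ π i j k → i = a ∧ j = b ∧ k = c := by
  obtain ⟨a, b, c, ⟨hab, hbc, hab', hbc'⟩, hu⟩ := (occ_one_iff π).mp hO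
  have hf := hu (π a) (π b) (π c) ⟨hab', hbc', by simpa [hI _] using hab, by simpa [hI _] using hbc⟩
  obtain ⟨fa, fb, fc⟩ := hf
  have hl : ∀ x, x < b → x ≠ a → b < π x := by
    intro x hx hxa
    by_contra hc
    have : π x ≠ b := fun e => hx.ne (π.injective (e.trans fb.symm))
    exact hxa (hu x b c ⟨hx, hbc, by rw [fb]; exact lt_of_le_of_ne (not_lt.mp hc) this, hbc'⟩).1
  have hr : ∀ x, b < x → x ≠ c → π x < b := by
    intro x hx hxa
    by_contra hc
    have : π x ≠ b := fun e => hx.ne' (π.injective (e.trans fb.symm))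
    exact hxa (hu a b x ⟨hab, hx, hab', by rw [fb]; exact lt_of_le_of_ne (not_lt.mp hc) this.symm⟩).2.2
  refine ⟨a, b, c, hab, hbc, fa, fb, fc, ?_, hl, hr, hu⟩
  have h1 : (Finset.Iio b).card ≤ (Finset.Ioi b).card := by
    refine Finset.card_le_card_of_injOn (fun x => if x = a then c else π x) ?_ ?_
    · intro x hx
      simp at hx ⊢
      split_ifs with h
      · exact hbc
      · exact hl x hx h
    · intro x hx y hy hxy
      simp at hx hy hxy
      have ic : ∀ z, π z = c → z = c := fun z hz => π.injective (hz.trans fc.symm)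
      split_ifs at hxy with h1 h2 h2
      · rw [h1, h2]
      · have := ic _ hxy.symm; rw [this] at hy; exact absurd hy (not_lt.mpr hbc.le)
      · have := ic _ hxy; rw [this] at hx; exact absurd hx (not_lt.mpr hbc.le)
      · exact π.injective hxy
  have h2 : (Finset.Ioi b).card ≤ (Finset.Iio b).card := by
    refine Finset.card_le_card_of_injOn (fun x => if x = c then a else π x) ?_ ?_
    · intro x hx
      simp at hx ⊢
      split_ifs with h
      · exact hab
      · exact hr x hx h
    · intro x hx y hy hxy
      simp at hx hy hxy
      have ic : ∀ z, π z = a → z = a := fun z hz => π.injective (hz.trans fa.symm)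
      split_ifs at hxy with h1 h2 h2
      · rw [h1, h2]
      · have := ic _ hxy.symm; rw [this] at hy; exact absurd hy (not_lt.mpr hab.le)
      · have := ic _ hxy; rw [this] at hx; exact absurd hx (not_lt.mpr hab.le)
      · exact π.injective hxy
  simp at h1 h2
  have := b.2
  omega

def sv {m : ℕ} (σ : Equiv.Perm (Fin (m+1))) (i : ℕ) : ℕ :=
  if h : i < m + 1 then (σ ⟨i, h⟩).val else i

def phi (m : ℕ) (s t : ℕ → ℕ) (x : ℕ) : ℕ :=
  if x = m then m else if x < m then (if x = s 0 then x else m + t x)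
    else if s (x - m) = m then x else s (x - m)

def Inv2 (m : ℕ) (s t : ℕ → ℕ) : Prop :=
  (∀ i, i ≤ m → s i ≤ m) ∧ (∀ i, i ≤ m → t i ≤ m) ∧ (∀ i, i ≤ m → t (s i) = i) ∧
    (∀ i, i ≤ m → s (t i) = i)

lemma sv_val {m : ℕ} (σ : Equiv.Perm (Fin (m+1))) (i : Fin (m+1)) : sv σ i.val = (σ i).val := by
  simp [sv, i.2]

lemma sv_inv2 {m : ℕ} (σ : Equiv.Perm (Fin (m+1))) : Inv2 m (sv σ) (sv σ⁻¹) := by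
  refine ⟨?_, ?_, ?_, ?_⟩ <;> intro i hi <;> lift i to Fin (m+1) using (by omega) <;>
    simp only [sv_val]
  · exact Nat.lt_succ_iff.mp (σ i).2
  · exact Nat.lt_succ_iff.mp (σ⁻¹ i).2
  · simp
  · simp

lemma phi_le {m : ℕ} {s t : ℕ → ℕ} (h : Inv2 m s t) (x : ℕ) (hx : x ≤ 2*m) :
    phi m s t x ≤ 2*m := by
  obtain ⟨h1, h2, h3, h4⟩ := h
  unfold phi
  split_ifs with a b c d
  · omega
  · omega
  · have := h2 x (by omega); omega
  · omega
  · have := h1 (x-m) (by omega); omega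

lemma phi_inv {m : ℕ} {s t : ℕ → ℕ} (h : Inv2 m s t) (h0 : s 0 ≠ m) (x : ℕ) (hx : x ≤ 2*m) :
    phi m s t (phi m s t x) = x := by
  obtain ⟨h1, h2, h3, h4⟩ := h
  rcases lt_trichotomy x m with hlt | rfl | hgt
  · by_cases hs : x = s 0
    · have : phi m s t x = x := by rw [phi, if_neg hlt.ne, if_pos hlt, if_pos hs]
      rw [this, this]
    · have e : phi m s t x = m + t x := by simp [phi, hlt, hlt.ne, hs]
      have : t x ≠ 0 := by
        intro e; apply hs; rw [← e, h4 x hlt.le]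
      rw [e, phi, if_neg (by omega), if_neg (by omega)]
      have e2 : m + t x - m = t x := by omega
      rw [e2, h4 x hlt.le, if_neg hlt.ne]
  · simp [phi]
  · by_cases hs : s (x-m) = m
    · have : phi m s t x = x := by
        rw [phi, if_neg hgt.ne', if_neg (by omega), if_pos hs]
      rw [this, this]
    · have e : phi m s t x = s (x-m) := by
        rw [phi, if_neg (by omega), if_neg (by omega), if_neg hs]
      have b := h1 (x-m) (by omega)
      have : s (x-m) ≠ s 0 := by
        intro e
        have := h3 (x-m) (by omega)
        rw [e, h3 0 (by omega)] at this
        omega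
      rw [e, phi, if_neg hs, if_pos (by omega), if_neg this, h3 (x-m) (by omega)]
      omega

def phiP {m : ℕ} (σ : Equiv.Perm (Fin (m+1))) (h0 : σ 0 ≠ Fin.last m) :
    Equiv.Perm (Fin (2*m+1)) :=
  Function.Involutive.toPerm
    (fun x => ⟨phi m (sv σ) (sv σ⁻¹) x.val,
      Nat.lt_succ_iff.mpr (phi_le (sv_inv2 σ) x.val (Nat.lt_succ_iff.mp x.2))⟩)
    (fun x => Fin.ext (phi_inv (sv_inv2 σ) (by
        rw [show (0:ℕ) = (0 : Fin (m+1)).val from rfl, sv_val]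
        intro e; exact h0 (Fin.ext e)) x.val (Nat.lt_succ_iff.mp x.2)))

lemma phiP_val {m : ℕ} (σ : Equiv.Perm (Fin (m+1))) (h0 : σ 0 ≠ Fin.last m) (x : Fin (2*m+1)) :
    (phiP σ h0 x).val = phi m (sv σ) (sv σ⁻¹) x.val := rfl

lemma phi_occ {m : ℕ} {s t : ℕ → ℕ} (h : Inv2 m s t) (h0 : s 0 ≠ m)
    (hav : ∀ i j k, i < j → j < k → k ≤ m → s i < s j → s j < s k → False)
    (i j k : ℕ) (hij : i < j) (hjk : j < k) (hk : k ≤ 2*m)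
    (h1 : phi m s t i < phi m s t j) (h2 : phi m s t j < phi m s t k) :
    i = s 0 ∧ j = m ∧ k = m + t m := by
  have hinv := phi_inv h h0
  obtain ⟨g1, g2, g3, g4⟩ := h
  -- general facts
  have L0 : ∀ x, x < m → (x = s 0 ∧ phi m s t x = x) ∨
      (x ≠ s 0 ∧ phi m s t x = m + t x ∧ 0 < t x ∧ s (t x) = x) := by
    intro x hx
    by_cases hs : x = s 0
    · left; refine ⟨hs, ?_⟩; rw [phi, if_neg hx.ne, if_pos hx, if_pos hs]
    · right
      refine ⟨hs, by simp [phi, hx, hx.ne, hs], ?_, g4 x hx.le⟩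
      rw [Nat.pos_iff_ne_zero]
      intro e; apply hs; rw [← e, g4 x hx.le]
  have R0 : ∀ x, m < x → x ≤ 2*m → (x = m + t m ∧ s (x-m) = m ∧ phi m s t x = x) ∨
      (s (x-m) < m ∧ phi m s t x = s (x-m)) := by
    intro x hx hx2
    by_cases hs : s (x-m) = m
    · left
      have := g3 (x-m) (by omega)
      rw [hs] at this
      exact ⟨by omega, hs, by rw [phi, if_neg hx.ne', if_neg (by omega), if_pos hs]⟩
    · right
      have := g1 (x-m) (by omega)
      exact ⟨by omega, by rw [phi, if_neg (by omega), if_neg (by omega), if_neg hs]⟩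
  have M0 : phi m s t m = m := by simp [phi]
  rcases lt_trichotomy j m with hj | rfl | hj
  · exfalso
    have hi := L0 i (by omega)
    have hj' := L0 j hj
    have jp : phi m s t j = m + t j ∧ 0 < t j ∧ s (t j) = j := by
      rcases hj' with ⟨e, e2⟩ | h
      · rcases hi with ⟨e3, _⟩ | h
        · omega
        · omega
      · exact h.2
    obtain ⟨j1, j2, j3⟩ := jp
    -- position of i
    obtain ⟨pi, hpi, hpi2⟩ : ∃ p, p < t j ∧ s p = i := by
      rcases hi with ⟨e, e2⟩ | ⟨_, e, e2, e3⟩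
      · exact ⟨0, j2, e.symm⟩
      · exact ⟨t i, by omega, e3⟩
    obtain ⟨pk, hpk, hpk3, hpk2⟩ : ∃ p, t j < p ∧ p ≤ m ∧ j < s p := by
      rcases lt_trichotomy k m with hk' | hk' | hk'
      · rcases L0 k hk' with ⟨e, e2⟩ | ⟨_, e, e2, e3⟩
        · omega
        · exact ⟨t k, by omega, g2 k hk'.le, by omega⟩
      · subst hk'; omega
      · rcases R0 k hk' hk with ⟨e, e1, e2⟩ | ⟨e, e2⟩
        · exact ⟨k - m, by omega, by omega, by omega⟩
        · omega
    exact hav pi (t j) pk hpi hpk hpk3 (by omega) (by omega)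
  · refine ⟨?_, rfl, ?_⟩
    · rcases L0 i hij with h | h <;> omega
    · rcases R0 k hjk hk with h | h <;> omega
  · exfalso
    have hk' := R0 k (by omega) hk
    have jp : phi m s t j = s (j-m) ∧ s (j-m) < m := by
      rcases R0 j hj (by omega) with h | h <;> omega
    obtain ⟨p, hp, hp2⟩ : ∃ p, p < j - m ∧ s p < s (j-m) := by
      rcases lt_trichotomy i m with hi | hi | hi
      · rcases L0 i hi with h | h
        · exact ⟨0, by omega, by omega⟩
        · omega
      · subst hi; omega
      · rcases R0 i hi (by omega) with h | h
        · omega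
        · exact ⟨i-m, by omega, by omega⟩
    refine hav p (j-m) (k-m) hp (by omega) (by omega) hp2 ?_
    omega

lemma sv_zero {m : ℕ} (σ : Equiv.Perm (Fin (m+1))) : sv σ 0 = (σ 0).val := sv_val σ 0

lemma phiP_good {m : ℕ} (σ : Equiv.Perm (Fin (m+1))) (h0 : σ 0 ≠ Fin.last m) (hav : Av123 σ) :
    IsInvolution (phiP σ h0) ∧ occ123 (phiP σ h0) = 1 := by
  have h := sv_inv2 σ
  have h0' : sv σ 0 ≠ m := by
    rw [sv_zero]; intro e; exact h0 (Fin.ext e)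
  refine ⟨fun x => Fin.ext (phi_inv h h0' x.val (Nat.lt_succ_iff.mp x.2)), ?_⟩
  rw [occ_one_iff]
  have key := phi_occ h h0' (by
    intro i j k hij hjk hk a b
    refine hav ⟨i, by omega⟩ ⟨j, by omega⟩ ⟨k, by omega⟩ hij hjk ?_ ?_
    · rw [Fin.lt_def, ← sv_val, ← sv_val]; exact a
    · rw [Fin.lt_def, ← sv_val, ← sv_val]; exact b)
  have hs0 : sv σ 0 < m := lt_of_le_of_ne (h.1 0 (by omega)) h0'
  have htm := h.2.1 m le_rfl
  have hst := h.2.2.2 m le_rfl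
  have htp : 0 < sv σ⁻¹ m := by
    rw [Nat.pos_iff_ne_zero]; intro e; rw [e] at hst; exact h0' hst
  refine ⟨⟨sv σ 0, by omega⟩, ⟨m, by omega⟩, ⟨m + sv σ⁻¹ m, by omega⟩, ?_, ?_⟩
  · have e1 : phi m (sv σ) (sv σ⁻¹) (sv σ 0) = sv σ 0 := by
      simp [phi, hs0, hs0.ne]
    have e2 : phi m (sv σ) (sv σ⁻¹) m = m := by simp [phi]
    have e3 : phi m (sv σ) (sv σ⁻¹) (m + sv σ⁻¹ m) = m + sv σ⁻¹ m := by
      rw [phi, if_neg (by omega), if_neg (by omega), if_pos]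
      rw [Nat.add_sub_cancel_left, hst]
    refine ⟨?_, ?_, ?_, ?_⟩ <;> simp only [Fin.lt_def, phiP_val, e1, e2, e3] <;> omega
  · rintro i j k ⟨hij, hjk, a, b⟩
    obtain ⟨x, y, z⟩ := key i j k hij hjk (Nat.lt_succ_iff.mp k.2) a b
    exact ⟨Fin.ext x, Fin.ext y, Fin.ext z⟩

lemma phiP_inj {m : ℕ} (σ τ : Equiv.Perm (Fin (m+1))) (h0 : σ 0 ≠ Fin.last m)
    (h0' : τ 0 ≠ Fin.last m) (h : phiP σ h0 = phiP τ h0') : σ = τ := by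
  have hσ := (sv_inv2 σ)
  have hτ := (sv_inv2 τ)
  have hp : ∀ x, x ≤ 2*m → phi m (sv σ) (sv σ⁻¹) x = phi m (sv τ) (sv τ⁻¹) x := by
    intro x hx
    have := congrArg (fun π => (π ⟨x, by omega⟩ : Fin (2*m+1)).val) h
    simpa only [phiP_val] using this
  have hpos : ∀ i, 0 < i → i ≤ m → sv σ i = sv τ i := by
    intro i hi him
    have := hp (m+i) (by omega)
    have b1 := hσ.1 i him
    have b2 := hτ.1 i him
    unfold phi at this
    have c1 : ¬ (m + i = m) := by omega
    have c2 : ¬ (m + i < m) := by omega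
    simp only [Nat.add_sub_cancel_left, c1, c2, if_false] at this
    split_ifs at this <;> omega
  have hz : sv σ 0 = sv τ 0 := by
    by_contra hne
    -- the preimage under τ of sv σ 0
    have a1 := hσ.1 0 (by omega)
    have a2 := hτ.2.1 _ a1
    have a3 := hτ.2.2.2 _ a1
    have a4 : 0 < sv τ⁻¹ (sv σ 0) := by
      rw [Nat.pos_iff_ne_zero]; intro e; rw [e] at a3; exact hne a3.symm
    have a5 := hpos _ a4 a2
    rw [a3] at a5
    have a6 := hσ.2.2.1 _ a2
    rw [a5, hσ.2.2.1 0 (by omega)] at a6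
    omega
  ext i
  rw [← sv_val, ← sv_val]
  rcases Nat.eq_zero_or_pos i.val with e | e
  · rw [e, hz]
  · exact hpos _ e (Nat.lt_succ_iff.mp i.2)

lemma phiP_surj {m : ℕ} (π : Equiv.Perm (Fin (2*m+1))) (hI : IsInvolution π)
    (hO : occ123 π = 1) :
    ∃ (σ : Equiv.Perm (Fin (m+1))) (h0 : σ 0 ≠ Fin.last m), Av123 σ ∧ phiP σ h0 = π := by
  obtain ⟨a, b, c, hab, hbc, fa, fb, fc, hn, hl, hr, hu⟩ := struct π hI hO
  have hb : b.val = m := by omega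
  have hab' : a.val < m := by rw [Fin.lt_def] at hab; omega
  have hbc' : m < c.val := by rw [Fin.lt_def] at hbc; omega
  -- lift of position
  let X : Fin (m+1) → Fin (2*m+1) := fun i => if i.val = 0 then a else ⟨m + i.val, by omega⟩
  have X0 : ∀ i, i.val = 0 → X i = a := fun i hi => if_pos hi
  have X1 : ∀ i, i.val ≠ 0 → (X i).val = m + i.val := fun i hi => by
    simp only [X]; rw [if_neg hi]
  have Xinj : Function.Injective X := by
    intro i j hij
    have := congrArg Fin.val hij
    by_cases h1 : i.val = 0 <;> by_cases h2 : j.val = 0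
    · exact Fin.ext (by omega)
    · rw [X0 i h1, X1 j h2] at this; omega
    · rw [X1 i h1, X0 j h2] at this; omega
    · rw [X1 i h1, X1 j h2] at this; exact Fin.ext (by omega)
  have Xv : ∀ i, (X i = c) ∨ (π (X i)).val < m := by
    intro i
    by_cases h1 : i.val = 0
    · right; rw [X0 i h1, fa]; exact hab'
    · by_cases h2 : X i = c
      · left; exact h2
      · right
        have := hr (X i) (by rw [Fin.lt_def, X1 i h1, hb]; omega) h2
        rw [Fin.lt_def] at this; omega
  let f : Fin (m+1) → Fin (m+1) := fun i => ⟨min (π (X i)).val m, by omega⟩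
  have fval : ∀ i, (f i).val = min (π (X i)).val m := fun i => rfl
  have finj : Function.Injective f := by
    intro i j hij
    have e := congrArg Fin.val hij
    rw [fval, fval] at e
    apply Xinj
    rcases Xv i with h1 | h1 <;> rcases Xv j with h2 | h2
    · rw [h1, h2]
    · rw [h1, fc] at e; omega
    · rw [h2, fc] at e; omega
    · exact π.injective (Fin.ext (by omega))
  let σ : Equiv.Perm (Fin (m+1)) := Equiv.ofBijective f (Finite.injective_iff_bijective.mp finj)
  have σval : ∀ i, (σ i).val = min (π (X i)).val m := fun i => rfl
  have σ0 : (σ 0).val = a.val := by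
    rw [σval, X0 0 rfl, fa]; omega
  have h0 : σ 0 ≠ Fin.last m := by
    intro e
    have := congrArg Fin.val e
    rw [σ0, Fin.val_last] at this
    omega
  have hav : Av123 σ := by
    intro i j k hij hjk h1 h2
    rw [Fin.lt_def, σval, σval] at h1 h2
    rw [Fin.lt_def] at hij hjk
    have hj := X1 j (by omega)
    have hk := X1 k (by omega)
    have hi : (X i).val < (X j).val := by
      by_cases h : i.val = 0
      · rw [X0 i h]; omega
      · rw [X1 i h]; omega
    have := hu (X i) (X j) (X k) ⟨hi, by rw [Fin.lt_def]; omega, by rw [Fin.lt_def]; omega,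
      by rw [Fin.lt_def]; omega⟩
    have := congrArg Fin.val this.2.1
    omega
  refine ⟨σ, h0, hav, ?_⟩
  have hiσ := (phiP_good σ h0 hav).1
  have hge : ∀ x : Fin (2*m+1), m < x.val → phiP σ h0 x = π x := by
    intro x hx
    have hxl := x.2
    have hs : sv σ (x.val - m) = min (π x).val m := by
      have := sv_val σ ⟨x.val - m, by omega⟩
      rw [σval] at this
      have e : X ⟨x.val - m, by omega⟩ = x := by
        apply Fin.ext; rw [X1 _ (by simp; omega)]; simp; omega
      rw [e] at this
      exact this
    apply Fin.ext
    rw [phiP_val, phi, if_neg (by omega), if_neg (by omega), hs]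
    by_cases hc : x = c
    · rw [hc, fc, if_pos (by omega)]
    · have := hr x (by rw [Fin.lt_def, hb]; exact hx) hc
      rw [Fin.lt_def, hb] at this
      rw [if_neg (by omega)]; omega
  ext1 x
  rcases lt_trichotomy x.val m with hx | hx | hx
  · by_cases hxa : x = a
    · rw [hxa, fa]
      apply Fin.ext
      rw [phiP_val, phi, if_neg (by omega), if_pos hab', sv_zero, σ0, if_pos rfl]
    · have h1 := hl x (by rw [Fin.lt_def, hb]; exact hx) hxa
      rw [Fin.lt_def, hb] at h1
      have h2 := hge (π x) h1
      rw [hI x] at h2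
      have := hiσ (π x)
      rw [h2] at this
      exact this
  · have : x = b := Fin.ext (by omega)
    rw [this, fb]
    apply Fin.ext
    rw [phiP_val, phi, if_pos hb, hb]
  · exact hge x hx

lemma count_eq (m : ℕ) : iCountOnceTotal123 (2*m+1) =
    Nat.card {σ : Equiv.Perm (Fin (m+1)) // Av123 σ ∧ σ 0 ≠ Fin.last m} := by
  symm
  refine Nat.card_eq_of_bijective
    (fun σ => (⟨phiP σ.1 σ.2.2, phiP_good σ.1 σ.2.2 σ.2.1⟩ :
      {π : Equiv.Perm (Fin (2*m+1)) // IsInvolution π ∧ occ123 π = 1})) ⟨?_, ?_⟩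
  · rintro ⟨σ, h1, h2⟩ ⟨τ, h3, h4⟩ h
    exact Subtype.ext (phiP_inj σ τ h2 h4 (congrArg Subtype.val h))
  · rintro ⟨π, h1, h2⟩
    obtain ⟨σ, h0, hav, e⟩ := phiP_surj π h1 h2
    exact ⟨⟨σ, hav, h0⟩, Subtype.ext e⟩

/-- For every odd `n ≥ 3`, `n · i_n(∅;123) = 3 · C(n, (n-3)/2)`; for every even `n`,
`i_n(∅;123) = 0`. -/
theorem statement11 (n : ℕ) :
    (3 ≤ n → Odd n → n * iCountOnceTotal123 n = 3 * n.choose ((n - 3) / 2)) ∧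
    (Even n → iCountOnceTotal123 n = 0) := by
  constructor
  · rintro h3 ⟨m, rfl⟩
    rw [count_eq, cnt_target, target_form m (by omega)]
    congr 2
    omega
  · intro he
    unfold iCountOnceTotal123
    rw [Nat.card_eq_zero]
    left
    refine ⟨?_⟩
    rintro ⟨π, h1, h2⟩
    obtain ⟨a, b, c, -, -, -, -, -, hn, -⟩ := struct π h1 h2
    rw [Nat.even_iff] at he
    omega
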